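/- Let L be an algebraic signature and E an equational theory over L with no drop equations, and write T(X) = (L.Term X)/∼_X for the quotient by the congruence generated by E, with maps T(f) induced by Term.relabel f. Let f : X → Y be any function, Z ⊆ Y a subset with inclusion i : Z → Y, and let f' : f⁻¹(Z) → Z be the restriction of f and i' : f⁻¹(Z) → X the inclusion. Then the square with vertices T(f⁻¹(Z)), T(Z), T(X), T(Y) and maps T(f'), T(i'), T(i), T(f) is a pullback in Type: the canonical map T(f⁻¹(Z)) → T(X) ×_{T(Y)} T(Z) is a bijection. In other words, T preserves pullbacks along monomorphisms. -/

import Mathlib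

open FirstOrder

universe u v

/-- The congruence on `L.Term X` generated by an equational theory `E`. -/
inductive EqCongr (L : FirstOrder.Language.{u, v}) (E : Set (L.Term ℕ × L.Term ℕ))
    {X : Type u} : L.Term X → L.Term X → Prop
  | ax {t s : L.Term ℕ} (h : (t, s) ∈ E) (σ : ℕ → L.Term X) :
      EqCongr L E (t.subst σ) (s.subst σ)
  | refl (t : L.Term X) : EqCongr L E t t
  | symm {t s : L.Term X} : EqCongr L E t s → EqCongr L E s t
  | trans {t s r : L.Term X} : EqCongr L E t s → EqCongr L E s r → EqCongr L E t r
  | func {n : ℕ} (f : L.Functions n) {t s : Fin n → L.Term X}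
      (h : ∀ i, EqCongr L E (t i) (s i)) :
      EqCongr L E (FirstOrder.Language.Term.func f t) (FirstOrder.Language.Term.func f s)

lemma relabel_subst {L : FirstOrder.Language.{u, v}} {α : Type*} {X Y : Type u}
    (t : L.Term α) (σ : α → L.Term X) (f : X → Y) :
    (t.subst σ).relabel f = t.subst (fun a => (σ a).relabel f) := by
  induction t with
  | var a => rfl
  | func g ts ih => simp [Language.Term.subst, Language.Term.relabel, ih]

lemma EqCongr.relabel {L : FirstOrder.Language.{u, v}} {E : Set (L.Term ℕ × L.Term ℕ)}
    {X Y : Type u} (f : X → Y) {t s : L.Term X} (h : EqCongr L E t s) :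
    EqCongr L E (t.relabel f) (s.relabel f) := by
  induction h with
  | ax h σ => rw [relabel_subst, relabel_subst]; exact EqCongr.ax h _
  | refl t => exact EqCongr.refl _
  | symm _ ih => exact ih.symm
  | trans _ _ ih1 ih2 => exact ih1.trans ih2
  | func g _ ih => exact EqCongr.func g ih

/-- The setoid given by the congruence generated by `E`. -/
def congrSetoid (L : FirstOrder.Language.{u, v}) (E : Set (L.Term ℕ × L.Term ℕ))
    (X : Type u) : Setoid (L.Term X) :=
  ⟨EqCongr L E, ⟨EqCongr.refl, EqCongr.symm, EqCongr.trans⟩⟩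

/-- The free model of the algebraic theory `(L, E)` on a type `X`:
terms modulo the congruence generated by `E`. -/
def T (L : FirstOrder.Language.{u, v}) (E : Set (L.Term ℕ × L.Term ℕ)) (X : Type u) : Type u :=
  Quotient (congrSetoid L E X)

/-- The action of the free model construction on functions, induced by `Term.relabel`. -/
def Tmap (L : FirstOrder.Language.{u, v}) (E : Set (L.Term ℕ × L.Term ℕ)) {X Y : Type u}
    (f : X → Y) : T L E X → T L E Y :=
  Quotient.map (FirstOrder.Language.Term.relabel f) (fun _ _ h => h.relabel f)

lemma Tmap_comp (L : FirstOrder.Language.{u, v}) (E : Set (L.Term ℕ × L.Term ℕ))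
    {X Y Z : Type u} (f : X → Y) (g : Y → Z) (q : T L E X) :
    Tmap L E g (Tmap L E f q) = Tmap L E (g ∘ f) q :=
  Quotient.inductionOn q fun t =>
    congrArg (Quotient.mk (congrSetoid L E Z)) (FirstOrder.Language.Term.relabel_relabel f g t)

/-!
Since no axiom of `E` drops a variable, congruent terms have the same variables, so every element
of `T L E Y` has a well-defined finite support in `Y`. For every map `i : X → Y`, the range of
`Tmap L E i` consists of the elements supported in `Set.range i`; taking preimages of such
ranges therefore commutes with `T`. Moreover `Tmap L E i` is injective when `i` is, even if
`X` is empty and `i` has no left inverse, because the partial inverse of `i` can be completed to a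
substitution by sending the remaining variables to any term at hand. For a square over an
injection, these two facts are what being a pullback amounts to.
-/

section Pullback

open Function

lemma bijective_pullback_iff_of_injective {P X Y Z : Type*} {f : X → Y} {g : Z → Y} {fst : P → X}
    {snd : P → Z} (hg : Injective g) (comm : f ∘ fst = g ∘ snd) :
    Bijective (fun a => (⟨(fst a, snd a), congrFun comm a⟩ : f.Pullback g)) ↔
      Injective fst ∧ Set.range fst = f ⁻¹' Set.range g := by
  have snd_eq {a b : P} (h : fst a = fst b) : snd a = snd b :=
    hg (((congrFun comm a).symm.trans (congrArg f h)).trans (congrFun comm b))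
  have range_subset : Set.range fst ⊆ f ⁻¹' Set.range g :=
    Set.range_subset_iff.2 fun a => ⟨snd a, (congrFun comm a).symm⟩
  constructor
  · rintro ⟨inj, surj⟩
    refine ⟨fun a b hab => inj (Subtype.ext (Prod.ext hab (snd_eq hab))),
      range_subset.antisymm ?_⟩
    rintro x ⟨z, hz⟩
    obtain ⟨a, ha⟩ := surj ⟨(x, z), hz.symm⟩
    exact ⟨a, congrArg Pullback.fst ha⟩
  · rintro ⟨inj, range_fst⟩
    refine ⟨fun a b hab => inj (congrArg Pullback.fst hab), ?_⟩
    rintro ⟨⟨x, z⟩, hxz⟩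
    obtain ⟨a, rfl⟩ : x ∈ Set.range fst := range_fst ▸ ⟨z, hxz.symm⟩
    exact ⟨a, Subtype.ext (Prod.ext rfl (hg ((congrFun comm a).symm.trans hxz)))⟩

lemma bijective_pullback_preimage {X Y : Type*} (f : X → Y) (Z : Set Y) :
    Bijective (fun a : f ⁻¹' Z =>
      (⟨(a.1, Z.restrictPreimage f a), rfl⟩ : f.Pullback (Subtype.val : Z → Y))) := by
  have range_val : Set.range (Subtype.val : f ⁻¹' Z → X) =
      f ⁻¹' Set.range (Subtype.val : Z → Y) := by
    rw [Subtype.range_coe, Subtype.range_coe]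
  have comm : f ∘ Subtype.val = Subtype.val ∘ Z.restrictPreimage f := rfl
  exact (bijective_pullback_iff_of_injective Subtype.val_injective comm).2
    ⟨Subtype.val_injective, range_val⟩

end Pullback

section Terms

open Language Term

variable {L : FirstOrder.Language.{u, v}} {α β γ : Type*}

lemma subst_var (t : L.Term α) : t.subst var = t := by
  induction t with
  | var a => rfl
  | func g ts ih => simp only [Term.subst, ih]

lemma subst_subst (t : L.Term α) (σ : α → L.Term β) (τ : β → L.Term γ) :
    (t.subst σ).subst τ = t.subst (fun a => (σ a).subst τ) := by
  induction t with
  | var a => rfl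
  | func g ts ih => simp only [Term.subst, ih]

lemma relabel_eq_subst (t : L.Term α) (i : α → β) : t.relabel i = t.subst (var ∘ i) := by
  induction t with
  | var a => rfl
  | func g ts ih => simp only [Term.relabel, Term.subst, ih]

lemma varFinset_subst [DecidableEq α] [DecidableEq β] (t : L.Term α) (σ : α → L.Term β) :
    (t.subst σ).varFinset = t.varFinset.biUnion fun a => (σ a).varFinset := by
  induction t with
  | var a => simp only [Term.subst, varFinset, Finset.singleton_biUnion]
  | func g ts ih => simp only [Term.subst, varFinset, ih, Finset.biUnion_biUnion]

lemma varFinset_relabel [DecidableEq α] [DecidableEq β] (t : L.Term α) (i : α → β) :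
    (t.relabel i).varFinset = t.varFinset.image i := by
  rw [relabel_eq_subst, varFinset_subst]
  exact Finset.biUnion_singleton

lemma mem_range_relabel [DecidableEq β] {i : α → β} {t : L.Term β} :
    t ∈ Set.range (Term.relabel i : L.Term α → L.Term β) ↔ ↑t.varFinset ⊆ Set.range i := by
  classical
  constructor
  · rintro ⟨s, rfl⟩
    rw [varFinset_relabel, Finset.coe_image]
    exact Set.image_subset_range i _
  · intro ht
    induction t with
    | var b =>
      obtain ⟨a, rfl⟩ : b ∈ Set.range i := ht (by simp [varFinset])
      exact ⟨var a, rfl⟩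
    | func g ts ih =>
      choose ss hss using fun k => ih k <| subset_trans
        (Finset.subset_biUnion_of_mem (fun k => (ts k).varFinset) (Finset.mem_univ k)) ht
      exact ⟨func g ss, congrArg (func g) (funext hss)⟩

end Terms

section Congruence

open Language Term

variable {L : FirstOrder.Language.{u, v}} {E : Set (L.Term ℕ × L.Term ℕ)} {X Y : Type u}

lemma EqCongr.subst (τ : X → L.Term Y) {t s : L.Term X} (h : EqCongr L E t s) :
    EqCongr L E (t.subst τ) (s.subst τ) := by
  induction h with
  | ax h σ => simpa only [subst_subst] using EqCongr.ax h _
  | refl t => exact EqCongr.refl _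
  | symm _ ih => exact ih.symm
  | trans _ _ ih₁ ih₂ => exact ih₁.trans ih₂
  | func g _ ih => exact EqCongr.func g ih

lemma EqCongr.of_relabel {i : X → Y} (hi : Function.Injective i) {t s : L.Term X}
    (h : EqCongr L E (t.relabel i) (s.relabel i)) : EqCongr L E t s := by
  let r : Y → L.Term X := Function.extend i var fun _ => t
  have subst_r (u : L.Term X) : (u.relabel i).subst r = u := by
    simp only [relabel_eq_subst, subst_subst, Function.comp_apply, Term.subst, r,
      hi.extend_apply, subst_var]
  simpa only [subst_r] using h.subst r

lemma EqCongr.varFinset_eq [DecidableEq X] (hnd : ∀ p ∈ E, p.1.varFinset = p.2.varFinset)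
    {t s : L.Term X} (h : EqCongr L E t s) : t.varFinset = s.varFinset := by
  induction h with
  | ax h σ => rw [varFinset_subst, varFinset_subst, hnd _ h]
  | refl t => rfl
  | symm _ ih => exact ih.symm
  | trans _ _ ih₁ ih₂ => exact ih₁.trans ih₂
  | func g _ ih => simp only [varFinset, ih]

end Congruence

section FreeModel

open Set

variable {L : FirstOrder.Language.{u, v}} {E : Set (L.Term ℕ × L.Term ℕ)} {X Y Z : Type u}

lemma Tmap_injective {i : X → Y} (hi : Function.Injective i) :
    Function.Injective (Tmap L E i) := by
  rintro ⟨t⟩ ⟨s⟩ h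
  exact Quotient.sound (EqCongr.of_relabel hi (Quotient.exact h))

lemma mk_mem_range_Tmap [DecidableEq Y] (hnd : ∀ p ∈ E, p.1.varFinset = p.2.varFinset)
    {i : X → Y} {t : L.Term Y} :
    Quotient.mk (congrSetoid L E Y) t ∈ range (Tmap L E i) ↔ ↑t.varFinset ⊆ range i := by
  constructor
  · rintro ⟨⟨s⟩, hs⟩
    have hst : EqCongr L E (s.relabel i) t := Quotient.exact hs
    rw [← hst.varFinset_eq hnd]
    exact mem_range_relabel.1 ⟨s, rfl⟩
  · intro ht
    obtain ⟨s, rfl⟩ := mem_range_relabel.2 ht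
    exact ⟨Quotient.mk _ s, rfl⟩

lemma range_Tmap_eq_preimage (hnd : ∀ p ∈ E, p.1.varFinset = p.2.varFinset) {P : Type u}
    {f : X → Y} {g : Z → Y} {i : P → X} (hi : range i = f ⁻¹' range g) :
    range (Tmap L E i) = Tmap L E f ⁻¹' range (Tmap L E g) := by
  classical
  ext ⟨t⟩
  calc Quotient.mk _ t ∈ range (Tmap L E i)
    _ ↔ ↑t.varFinset ⊆ f ⁻¹' range g := by rw [mk_mem_range_Tmap hnd, hi]
    _ ↔ ↑(t.relabel f).varFinset ⊆ range g := by
      rw [varFinset_relabel, Finset.coe_image, image_subset_iff]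
    _ ↔ Tmap L E f (Quotient.mk _ t) ∈ range (Tmap L E g) := (mk_mem_range_Tmap hnd).symm

end FreeModel

theorem freeModel_preserves_pullbacks_along_monos_general
    {L : FirstOrder.Language.{u, v}} {E : Set (L.Term ℕ × L.Term ℕ)}
    (hnd : ∀ p ∈ E, p.1.varFinset = p.2.varFinset)
    {P X Y Z : Type u} {f : X → Y} {g : Z → Y} {fst : P → X} {snd : P → Z}
    (hg : Function.Injective g) (comm : f ∘ fst = g ∘ snd)
    (hP : Function.Bijective
      (fun a => (⟨(fst a, snd a), congrFun comm a⟩ : f.Pullback g))) :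
    Function.Bijective
      (fun q : T L E P =>
        (⟨(Tmap L E fst q, Tmap L E snd q), by rw [Tmap_comp, Tmap_comp, comm]⟩ :
          (Tmap L E f).Pullback (Tmap L E g))) := by
  obtain ⟨fst_injective, range_fst⟩ := (bijective_pullback_iff_of_injective hg comm).1 hP
  have Tmap_comm : Tmap L E f ∘ Tmap L E fst = Tmap L E g ∘ Tmap L E snd :=
    funext fun q => by simp only [Function.comp_apply, Tmap_comp, comm]
  exact (bijective_pullback_iff_of_injective (Tmap_injective hg) Tmap_comm).2
    ⟨Tmap_injective fst_injective, range_Tmap_eq_preimage hnd range_fst⟩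

theorem freeModel_preserves_pullbacks_along_monos
    (L : FirstOrder.Language.{u, v}) (halg : ∀ n, IsEmpty (L.Relations n))
    (E : Set (L.Term ℕ × L.Term ℕ))
    (hnd : ∀ p ∈ E, p.1.varFinset = p.2.varFinset)
    {X Y : Type u} (f : X → Y) (Z : Set Y) :
    Function.Bijective
      (fun q : T L E (f ⁻¹' Z : Set X) =>
        (⟨(Tmap L E (Subtype.val : (f ⁻¹' Z : Set X) → X) q,
           Tmap L E (fun a : (f ⁻¹' Z : Set X) => (⟨f a.1, a.2⟩ : Z)) q),
          by
            rw [Tmap_comp, Tmap_comp]; rfl⟩ :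
          {p : T L E X × T L E Z //
            Tmap L E f p.1 = Tmap L E (Subtype.val : Z → Y) p.2})) :=
  freeModel_preserves_pullbacks_along_monos_general (f := f) (fst := Subtype.val) hnd
    Subtype.val_injective rfl (bijective_pullback_preimage f Z)
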